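/- arXiv:2301.10198 — 7 statements merged into one kernel-verified Lean document; each statement's English description precedes it below -/
import Mathlib

section
/- Let Σ be a finite alphabet and let L₁, L₂ ⊆ Σ* be languages with L₁ ⊑ L₂ (i.e., there is a constant c > 0 such that every word w₁ ∈ L₁ is a factor of some word w₂ ∈ L₂ with |w₂| ≤ c·|w₁|). If L₁ has exponential growth, then L₂ has exponential growth. -/
/-!
A word of length at most `K` has at most `(K + 1) ^ 2` factors, since a factor is determined by its
starting position and its length. With `C` a positive integer bounding the embedding constant, every
word of `L₁` of length at most `m` is a factor of a word of `L₂` of length at most `K = C * m`, so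
`|L₁ ∩ Σ^{≤ m}| ≤ (K + 1) ^ 2 * |L₂ ∩ Σ^{≤ K}|` (`ncard_le_mul_of_factor`). If `r > 1` witnesses the
growth of `L₁`, let `s > 1` be the `2C`-th root of `r`, so that `r ^ m = s ^ K * s ^ K`. As
`(K + 1) ^ 2 ≤ s ^ K` for large `K` (`eventually_sq_le_pow`), one factor `s ^ K` absorbs the
polynomial loss and the other one bounds `|L₂ ∩ Σ^{≤ K}|` from below.
-/

/-- A language `L` over a finite alphabet has *exponential growth* if there is a real `r > 1`
such that `|L ∩ Σ^{≤ m}| ≥ r ^ m` for infinitely many `m`. -/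
def HasExponentialGrowth {α : Type*} (L : Set (List α)) : Prop :=
  ∃ r : ℝ, 1 < r ∧ ∀ N : ℕ, ∃ m ≥ N, r ^ m ≤ ({w ∈ L | w.length ≤ m} : Set (List α)).ncard

lemma ncard_le_mul_of_factor {α : Type*} [Fintype α] (A L : Set (List α)) (K : ℕ)
    (h : ∀ u ∈ A, ∃ w ∈ L, w.length ≤ K ∧ u <:+: w) :
    A.ncard ≤ (K + 1) ^ 2 * ({w ∈ L | w.length ≤ K} : Set (List α)).ncard := by
  set B : Set (List α) := {w ∈ L | w.length ≤ K} with hB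
  have hBfin : B.Finite := (List.finite_length_le α K).subset fun w hw => hw.2
  set P : Set (List α × ℕ × ℕ) := B ×ˢ (Set.Iio (K + 1) ×ˢ Set.Iio (K + 1)) with hP
  have hPfin : P.Finite := hBfin.prod ((Set.finite_Iio _).prod (Set.finite_Iio _))
  -- The triple `(w, i, j)` encodes the factor of `w` of length `j` starting at position `i`.
  let f : List α × ℕ × ℕ → List α := fun p => (p.1.drop p.2.1).take p.2.2
  have hsub : A ⊆ f '' P := by
    intro u hu
    obtain ⟨w, hw, hlen, x, y, rfl⟩ := h u hu
    refine ⟨(x ++ u ++ y, x.length, u.length), ⟨⟨hw, hlen⟩, ?_, ?_⟩, ?_⟩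
    · simp only [List.length_append, Set.mem_Iio] at hlen ⊢
      omega
    · simp only [List.length_append, Set.mem_Iio] at hlen ⊢
      omega
    · simp [f]
  calc A.ncard ≤ (f '' P).ncard := Set.ncard_le_ncard hsub (hPfin.image f)
    _ ≤ P.ncard := Set.ncard_image_le hPfin
    _ = (K + 1) ^ 2 * B.ncard := by
      have hI : (Set.Iio (K + 1)).ncard = K + 1 := by
        rw [← Finset.coe_Iio, Set.ncard_coe_finset, Nat.card_Iio]
      rw [hP, Set.ncard_prod, Set.ncard_prod, hI]
      ring

lemma eventually_sq_le_pow {s : ℝ} (hs : 1 < s) :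
    ∃ K₀ : ℕ, ∀ K ≥ K₀, ((K : ℝ) + 1) ^ 2 ≤ s ^ K := by
  have ht := tendsto_pow_const_div_const_pow_of_one_lt 2 hs
  have he := ht.eventually (gt_mem_nhds (show (0 : ℝ) < 1 / 4 by norm_num))
  obtain ⟨K₀, hK₀⟩ := Filter.eventually_atTop.1 he
  refine ⟨K₀ + 1, fun K hK => ?_⟩
  have h1 := hK₀ K (by omega)
  rw [div_lt_iff₀ (by positivity)] at h1
  have h2 : (1 : ℝ) ≤ K := by exact_mod_cast (show 1 ≤ K by omega)
  nlinarith

/-- if `L₁ ⊑ L₂` (every word of `L₁` is a factor of a word of `L₂` of linearly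
bounded length) and `L₁` has exponential growth, then so does `L₂`. -/
theorem exponential_growth_of_linembed {α : Type*} [Fintype α] (L₁ L₂ : Set (List α))
    (hembed : ∃ c : ℝ, 0 < c ∧ ∀ w₁ ∈ L₁, ∃ w₂ ∈ L₂,
      (w₂.length : ℝ) ≤ c * w₁.length ∧ w₁ <:+: w₂)
    (hexp : HasExponentialGrowth L₁) :
    HasExponentialGrowth L₂ := by
  obtain ⟨c, hc, hemb⟩ := hembed
  obtain ⟨r, hr, hgrow⟩ := hexp
  obtain ⟨C, hC⟩ := exists_nat_ge c
  have hC0 : 0 < C := by exact_mod_cast hc.trans_le hC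
  obtain ⟨s, hs, hsr⟩ : ∃ s : ℝ, 1 < s ∧ s ^ (2 * C) = r :=
    ⟨r ^ (((2 * C : ℕ) : ℝ)⁻¹), Real.one_lt_rpow hr (by positivity),
      Real.rpow_inv_natCast_pow (by linarith) (by omega)⟩
  obtain ⟨K₀, hK₀⟩ := eventually_sq_le_pow hs
  refine ⟨s, hs, fun N => ?_⟩
  obtain ⟨m, hm, hcount⟩ := hgrow (max N K₀)
  have hmK : m ≤ C * m := Nat.le_mul_of_pos_left m hC0
  have hNm : N ≤ m := (le_max_left _ _).trans hm
  have hKm : K₀ ≤ m := (le_max_right _ _).trans hm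
  refine ⟨C * m, hNm.trans hmK, ?_⟩
  have hle := ncard_le_mul_of_factor {w ∈ L₁ | w.length ≤ m} L₂ (C * m) (by
    rintro u ⟨hu, hlen⟩
    obtain ⟨w, hw, hwl, hfac⟩ := hemb u hu
    refine ⟨w, hw, ?_, hfac⟩
    have hlen' : (u.length : ℝ) ≤ m := by exact_mod_cast hlen
    have : (w.length : ℝ) ≤ C * m := hwl.trans (by gcongr)
    exact_mod_cast this)
  have hpoly := hK₀ (C * m) (hKm.trans hmK)
  have hpos : (0 : ℝ) < s ^ (C * m) := by positivity
  refine le_of_mul_le_mul_left ?_ hpos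
  calc s ^ (C * m) * s ^ (C * m) = r ^ m := by
        rw [← hsr, ← pow_mul, ← pow_add]
        congr 1
        ring
    _ ≤ _ := hcount
    _ ≤ (((C * m : ℕ) : ℝ) + 1) ^ 2 *
        (({w ∈ L₂ | w.length ≤ C * m} : Set (List α)).ncard : ℝ) := by exact_mod_cast hle
    _ ≤ _ := by gcongr
end

section
/- Let Σ be a finite alphabet containing a letter a, and define the predicate 𝒫₍¬a₎ on languages over Σ by: 𝒫₍¬a₎(L) if and only if L is non-empty and L ≠ {a} (where a denotes the one-letter word). Then 𝒫₍¬a₎ satisfies: (O1) if 𝒫₍¬a₎(K) and K ⊆ L then 𝒫₍¬a₎(L); (O2) if 𝒫₍¬a₎(K ∪ L) then 𝒫₍¬a₎(K) or 𝒫₍¬a₎(L); (O3) if 𝒫₍¬a₎(F(K·L)) then 𝒫₍¬a₎(F(K)) or 𝒫₍¬a₎(F(L)); but 𝒫₍¬a₎ does not satisfy axiom (U4): 𝒫₍¬a₎(F({a})) holds (since F({a}) = {ε, a}) while 𝒫₍¬a₎({a}) does not. -/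
/-!
`PNotA a L` fails exactly when `L = ∅` or `L = {[a]}`, that is, when `L ⊆ {[a]}`. Hence `PNotA a L`
says that `L` contains some word other than `[a]`, which makes (O1) and (O2) immediate. A nonempty
factor closure contains the empty word, so `PNotA a (FactorClosure L)` is just nonemptiness of `L`;
this gives (O3), and also `PNotA a (FactorClosure {[a]})`, whereas `PNotA a {[a]}` fails.
-/

/-- The factor closure of a language: all factors (infixes) of words of `L`. -/
def FactorClosure {α : Type*} (L : Set (List α)) : Set (List α) :=
  {u | ∃ w ∈ L, u <:+: w}

/-- Concatenation of two languages. -/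
def LangConcat {α : Type*} (K L : Set (List α)) : Set (List α) :=
  {w | ∃ u ∈ K, ∃ v ∈ L, w = u ++ v}

/-- The predicate `P_{¬a}`: the language is nonempty and different from `{a}`. -/
def PNotA {α : Type*} (a : α) (L : Set (List α)) : Prop :=
  L.Nonempty ∧ L ≠ {[a]}

theorem pNotA_iff_exists_ne {α : Type*} (a : α) (L : Set (List α)) :
    PNotA a L ↔ ∃ w ∈ L, w ≠ [a] := by
  constructor
  · rintro ⟨hne, h⟩
    by_contra! hc
    exact h (Set.eq_singleton_iff_nonempty_unique_mem.2 ⟨hne, hc⟩)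
  · rintro ⟨w, hw, hwa⟩
    exact ⟨⟨w, hw⟩, fun h => hwa (by simpa [h] using hw)⟩

/-- For the factor closure of `L`, `PNotA a` is nonemptiness of `L`, witnessed by the empty word. -/
theorem pNotA_factorClosure_iff {α : Type*} (a : α) (L : Set (List α)) :
    PNotA a (FactorClosure L) ↔ L.Nonempty := by
  constructor
  · rintro ⟨⟨_, w, hw, _⟩, _⟩
    exact ⟨w, hw⟩
  · rintro ⟨w, hw⟩
    exact (pNotA_iff_exists_ne a _).2 ⟨[], ⟨w, hw, List.nil_infix⟩, by simp⟩

/-- `P_{¬a}` satisfies (O1), (O2), (O3), but not (U4):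
indeed `F({a}) = {ε, a}`, `P_{¬a}(F({a}))` holds, while `P_{¬a}({a})` fails. -/
theorem PNotA_satisfies_O_not_U4 {α : Type*} [Fintype α] (a : α) :
    (∀ K L : Set (List α), PNotA a K → K ⊆ L → PNotA a L) ∧
    (∀ K L : Set (List α), PNotA a (K ∪ L) → PNotA a K ∨ PNotA a L) ∧
    (∀ K L : Set (List α), PNotA a (FactorClosure (LangConcat K L)) →
      PNotA a (FactorClosure K) ∨ PNotA a (FactorClosure L)) ∧
    (FactorClosure ({[a]} : Set (List α)) = {[], [a]} ∧
      PNotA a (FactorClosure ({[a]} : Set (List α))) ∧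
      ¬ PNotA a ({[a]} : Set (List α))) := by
  refine ⟨?_, ?_, ?_, ?_, ?_, ?_⟩
  · intro K L hK hKL
    rw [pNotA_iff_exists_ne] at hK ⊢
    obtain ⟨w, hw, hwa⟩ := hK
    exact ⟨w, hKL hw, hwa⟩
  · intro K L h
    simp only [pNotA_iff_exists_ne] at h ⊢
    obtain ⟨w, hw | hw, hwa⟩ := h
    · exact Or.inl ⟨w, hw, hwa⟩
    · exact Or.inr ⟨w, hw, hwa⟩
  · intro K L h
    rw [pNotA_factorClosure_iff] at h
    obtain ⟨_, u, hu, _⟩ := h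
    exact Or.inl ((pNotA_factorClosure_iff a K).2 ⟨u, hu⟩)
  · ext u
    simp [FactorClosure, List.infix_cons_iff, List.prefix_cons_iff]
    exact Or.inl
  · exact (pNotA_factorClosure_iff a _).2 ⟨[a], rfl⟩
  · exact fun h => h.2 rfl
end

section
/- Let G be a context-free grammar with terminal alphabet T and nonterminal set N, and let A ∈ N. Then the language { u ∈ T* | there exists v ∈ T* such that the sentential form consisting of the single symbol A derives (in G) the sentential form u A v, i.e. the list (map terminal u) ++ [nonterminal A] ++ (map terminal v) } is context-free. -/
/-!
In a derivation tree witnessing `A ⇒* u A v`, follow the path (the *spine*) from the root to the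
distinguished leaf `A`. The word `u` is produced by what hangs to the left of the spine; what hangs
to the right only has to derive *some* terminal word. So add to `g` a marked copy of every
nonterminal, with these extra rules:

* `B' → γ₁ C'` for each rule `B → γ₁ C γ₂` of `g` such that every symbol of `γ₂` derives a terminal
  word;
* `A' → ε`, ending the spine at the distinguished leaf.

The marked symbol is always the last one of a sentential form. With start symbol `A'`, the new
grammar generates exactly the required words. One inclusion (`exists_spine_of_derives`) extends
the spine backwards along a derivation of `u A v` in `g`; the other (`exists_of_derives_spine`)
carries forwards along a derivation in the new grammar an invariant saying that the erased sentential
form, continued by a suitable suffix, is derivable from `A` in `g`.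
-/

namespace PumpPrefix

open Symbol

variable {T : Type} (g : ContextFreeGrammar T)

/-- The symbol `s` derives some word of terminals. -/
def Productive (s : Symbol T g.NT) : Prop :=
  ∃ v : List T, g.Derives [s] (v.map terminal)

variable {g}

lemma productive_terminal (t : T) : Productive g (terminal t) :=
  ⟨[t], .refl _⟩

lemma exists_derives_of_productive {l : List (Symbol T g.NT)} (h : ∀ s ∈ l, Productive g s) :
    ∃ v : List T, g.Derives l (v.map terminal) := by
  induction l with
  | nil => exact ⟨[], .refl _⟩
  | cons s l ih =>
    obtain ⟨v, hv⟩ := h s (by simp)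
    obtain ⟨w, hw⟩ := ih fun x hx => h x (by simp [hx])
    refine ⟨v ++ w, ?_⟩
    have h1 := hv.append_right l
    have h2 := hw.append_left (v.map terminal)
    simpa using h1.trans h2

lemma productive_of_rule {r : ContextFreeRule T g.NT} (hr : r ∈ g.rules)
    (h : ∀ s ∈ r.output, Productive g s) : Productive g (nonterminal r.input) := by
  obtain ⟨v, hv⟩ := exists_derives_of_productive h
  exact ⟨v, ContextFreeGrammar.Produces.trans_derives ⟨r, hr, .input_output⟩ hv⟩

/-- Embedding of symbols into the enlarged alphabet: `Sum.inl` holds the original nonterminals,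
`Sum.inr` the marked ones. -/
def lift {N : Type} : Symbol T N → Symbol T (N ⊕ N)
  | terminal t => terminal t
  | nonterminal B => nonterminal (Sum.inl B)

lemma lift_ne_marked {N : Type} (s : Symbol T N) (B : N) :
    nonterminal (Sum.inr B) ≠ lift s := by
  cases s <;> simp [lift]

lemma lift_injective {N : Type} : Function.Injective (lift : Symbol T N → _) := by
  intro a b h
  cases a <;> cases b <;> simp_all [lift]

@[simp] lemma map_lift_terminal {N : Type} (u : List T) :
    (u.map (terminal : T → Symbol T N)).map lift = u.map terminal := by
  simp [lift, Function.comp_def]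

/-- The rule `r`, acting on unmarked nonterminals. -/
def liftRule {N : Type} (r : ContextFreeRule T N) : ContextFreeRule T (N ⊕ N) :=
  ⟨Sum.inl r.input, r.output.map lift⟩

variable (g) in
/-- The rules `B' → γ₁ C'` that prolong the spine. -/
def spineRules : Set (ContextFreeRule T (g.NT ⊕ g.NT)) :=
  {ρ | ∃ r ∈ g.rules, ∃ γ₁ C γ₂, r.output = γ₁ ++ nonterminal C :: γ₂ ∧
    (∀ s ∈ γ₂, Productive g s) ∧
    ρ = ⟨Sum.inr r.input, γ₁.map lift ++ [nonterminal (Sum.inr C)]⟩}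

/-- A spine rule is determined by a rule of `g` and the position of the distinguished nonterminal
in its right-hand side. -/
lemma finite_spineRules : (spineRules g).Finite := by
  let mark : Symbol T g.NT → Symbol T (g.NT ⊕ g.NT)
    | terminal t => terminal t
    | nonterminal B => nonterminal (Sum.inr B)
  refine Set.Finite.subset (g.rules.finite_toSet.biUnion fun r _ =>
    (Set.finite_Iio r.output.length).image fun n =>
      (⟨Sum.inr r.input, (r.output.take n).map lift ++ ((r.output.drop n).take 1).map mark⟩ :
        ContextFreeRule T (g.NT ⊕ g.NT))) ?_
  rintro ρ ⟨r, hr, γ₁, C, γ₂, h, -, rfl⟩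
  simp only [Set.mem_iUnion, Set.mem_image]
  exact ⟨r, hr, γ₁.length, by simp [h], by simp [h, mark]⟩

variable (g) in
open Classical in
/-- The enlarged grammar, with start symbol the marked copy of `A`. -/
noncomputable def spineGrammar (A : g.NT) : ContextFreeGrammar T where
  NT := g.NT ⊕ g.NT
  initial := Sum.inr A
  rules := g.rules.image liftRule ∪ finite_spineRules.toFinset ∪ {⟨Sum.inr A, []⟩}

lemma mem_rules {A : g.NT} {ρ : ContextFreeRule T (g.NT ⊕ g.NT)} :
    ρ ∈ (spineGrammar g A).rules ↔
      (∃ r ∈ g.rules, liftRule r = ρ) ∨ ρ ∈ spineRules g ∨ ρ = ⟨Sum.inr A, []⟩ := by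
  classical
  change ρ ∈ g.rules.image liftRule ∪ finite_spineRules.toFinset ∪ {⟨Sum.inr A, []⟩} ↔ _
  simp only [Finset.mem_union, Finset.mem_image, Set.Finite.mem_toFinset, Finset.mem_singleton,
    or_assoc]

/-- Derivability in `spineGrammar g A`, with the nonterminal type displayed as `g.NT ⊕ g.NT` so
that list equalities do not mix it with the projection `(spineGrammar g A).NT`. -/
def SpineDerives (A : g.NT) (x y : List (Symbol T (g.NT ⊕ g.NT))) : Prop :=
  (spineGrammar g A).Derives x y

lemma SpineDerives.head {A : g.NT} {ρ : ContextFreeRule T (g.NT ⊕ g.NT)}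
    (h : ρ ∈ (spineGrammar g A).rules) (p q : List (Symbol T (g.NT ⊕ g.NT)))
    {x y z : List (Symbol T (g.NT ⊕ g.NT))} (hx : x = p ++ [nonterminal ρ.input] ++ q)
    (hy : y = p ++ ρ.output ++ q) (hd : SpineDerives A y z) : SpineDerives A x z :=
  ContextFreeGrammar.Produces.trans_derives
    ⟨ρ, h, ContextFreeRule.rewrites_iff.2 ⟨p, q, hx, hy⟩⟩ hd

/-- Every sentential form deriving `u A v` in `g` has a nonterminal `C` on the spine: what precedes
it, followed by the marked copy of `C`, derives `u` in the enlarged grammar, and what follows it is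
productive. -/
lemma exists_spine_of_derives {A : g.NT} {u v : List T} {w : List (Symbol T g.NT)}
    (h : g.Derives w (u.map terminal ++ [nonterminal A] ++ v.map terminal)) :
    ∃ α C β, w = α ++ nonterminal C :: β ∧ (∀ s ∈ β, Productive g s) ∧
      SpineDerives A (α.map lift ++ [nonterminal (Sum.inr C)]) (u.map terminal) := by
  induction h using Relation.ReflTransGen.head_induction_on with
  | refl =>
    refine ⟨u.map terminal, A, v.map terminal, by simp, ?_, ?_⟩
    · intro s hs
      obtain ⟨t, -, rfl⟩ := List.mem_map.1 hs
      exact productive_terminal t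
    · exact SpineDerives.head (mem_rules.2 (.inr (.inr rfl))) (u.map terminal) []
        (by rw [map_lift_terminal, List.append_nil]) (y := u.map terminal)
        (by simp) Relation.ReflTransGen.refl
  | head hstep _ ih =>
    obtain ⟨α, C, β, hw, hβ, hd⟩ := ih
    obtain ⟨r, hr, hrw⟩ := hstep
    obtain ⟨p, q, rfl, rfl⟩ := hrw.exists_parts
    rw [List.append_assoc, List.append_eq_append_iff] at hw
    obtain ⟨δ, rfl, hδ⟩ | ⟨δ, rfl, hδ⟩ := hw
    · rw [List.append_eq_append_iff] at hδ
      -- the case `δ₂ = []` of the second alternative puts `C` at the head of `q`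
      have key : (∃ δ₂, δ = r.output ++ δ₂ ∧ q = δ₂ ++ nonterminal C :: β) ∨
          ∃ δ₂, r.output = δ ++ nonterminal C :: δ₂ ∧ β = δ₂ ++ q := by
        obtain ⟨δ₂, h1, h2⟩ | ⟨δ₂, h1, h2⟩ := hδ
        · exact .inl ⟨δ₂, h1, h2⟩
        · cases δ₂ with
          | nil => exact .inl ⟨[], by simpa using h1.symm, by simpa using h2.symm⟩
          | cons x δ₂ =>
            obtain ⟨rfl, rfl⟩ := List.cons.inj h2
            exact .inr ⟨δ₂, h1, rfl⟩
      obtain ⟨δ₂, rfl, rfl⟩ | ⟨δ₂, h1, rfl⟩ := key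
      · -- the rewritten nonterminal is to the left of the spine
        refine ⟨p ++ nonterminal r.input :: δ₂, C, β, by simp, hβ, ?_⟩
        exact SpineDerives.head (mem_rules.2 (.inl ⟨r, hr, rfl⟩))
          (p.map lift) (δ₂.map lift ++ [nonterminal (Sum.inr C)])
          (by simp [liftRule, lift]) (by simp [liftRule]) hd
      · -- the rewritten nonterminal is on the spine
        refine ⟨p, r.input, q, by simp, fun s hs => hβ s (by simp [hs]), ?_⟩
        exact SpineDerives.head (mem_rules.2 (.inr (.inl
          ⟨r, hr, δ, C, δ₂, h1, fun s hs => hβ s (by simp [hs]), rfl⟩))) (p.map lift) []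
          (by simp) (by simp) hd
    · cases δ with
      | nil =>
        -- `C` is the first symbol of `r.output ++ q`
        cases ho : r.output with
        | nil =>
          -- an erasing rule applied just to the left of the spine
          simp only [ho, List.nil_append] at hδ
          subst hδ
          refine ⟨α ++ [nonterminal r.input], C, β, by simp, hβ, ?_⟩
          exact SpineDerives.head (mem_rules.2 (.inl ⟨r, hr, rfl⟩))
            (α.map lift) [nonterminal (Sum.inr C)]
            (by simp [liftRule, lift, ho]) (by simp [liftRule, ho]) hd
        | cons x δ₂ =>
          simp only [ho, List.nil_append, List.cons_append] at hδ
          obtain ⟨rfl, rfl⟩ := List.cons.inj hδ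
          refine ⟨α, r.input, q, by simp, fun s hs => hβ s (by simp [hs]), ?_⟩
          exact SpineDerives.head (mem_rules.2 (.inr (.inl
            ⟨r, hr, [], C, δ₂, ho, fun s hs => hβ s (by simp [hs]), rfl⟩))) (α.map lift) []
            (by simp) (by simp) hd
      | cons x δ =>
        -- the rewritten nonterminal is to the right of the spine
        obtain ⟨rfl, rfl⟩ := List.cons.inj hδ
        refine ⟨α, C, δ ++ nonterminal r.input :: q, by simp, ?_, hd⟩
        intro s hs
        have hin : Productive g (nonterminal r.input) :=
          productive_of_rule hr fun s hs => hβ s (by simp [hs])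
        simp only [List.mem_append, List.mem_cons] at hs
        obtain hs | rfl | hs := hs
        · exact hβ s (by simp [hs])
        · exact hin
        · exact hβ s (by simp [hs])

lemma rewrites_liftRule {N : Type} {r : ContextFreeRule T N} {α : List (Symbol T N)}
    {t w : List (Symbol T (N ⊕ N))} (ht : nonterminal (Sum.inl r.input) ∉ t)
    (h : (liftRule r).Rewrites (α.map lift ++ t) w) :
    ∃ α', r.Rewrites α α' ∧ w = α'.map lift ++ t := by
  induction α generalizing w with
  | nil => exact absurd h.nonterminal_input_mem ht
  | cons x α ih =>
    rw [List.map_cons, List.cons_append] at h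
    generalize hx : lift x = y at h
    cases h with
    | head =>
      have : x = nonterminal r.input := lift_injective (by rw [hx]; rfl)
      subst this
      exact ⟨r.output ++ α, .head α, by simp [liftRule]⟩
    | cons _ h =>
      obtain ⟨α', h1, rfl⟩ := ih h
      exact ⟨x :: α', .cons x h1, by simp [hx]⟩

lemma rewrites_marked {N : Type} {ρ : ContextFreeRule T (N ⊕ N)} {B : N}
    (hρ : ρ.input = Sum.inr B) {α : List (Symbol T N)}
    {t w : List (Symbol T (N ⊕ N))} (h : ρ.Rewrites (α.map lift ++ t) w) :
    ∃ t', ρ.Rewrites t t' ∧ w = α.map lift ++ t' := by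
  induction α generalizing w with
  | nil => exact ⟨w, h, rfl⟩
  | cons x α ih =>
    rw [List.map_cons, List.cons_append] at h
    generalize hx : lift x = y at h
    cases h with
    | head => exact absurd hx.symm (hρ ▸ lift_ne_marked x B)
    | cons _ h =>
      obtain ⟨t', h1, rfl⟩ := ih h
      exact ⟨t', h1, by simp [hx]⟩

lemma rewrites_singleton {N : Type} {ρ : ContextFreeRule T N} {s : Symbol T N}
    {w : List (Symbol T N)} (h : ρ.Rewrites [s] w) :
    s = nonterminal ρ.input ∧ w = ρ.output := by
  cases h with
  | head => simp
  | cons _ h => cases h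

/-- A sentential form of the enlarged grammar consists of unmarked symbols `α` followed by at most
one marked nonterminal `C`; if the marked one is gone, then `C = A`. In both cases `α C β` is
derivable from `A` in `g` for some productive `β`. -/
lemma exists_of_derives_spine {A : g.NT} {w : List (Symbol T (g.NT ⊕ g.NT))}
    (h : (spineGrammar g A).Derives [nonterminal (Sum.inr A)] w) :
    ∃ α C β t, g.Derives [nonterminal A] (α ++ [nonterminal C] ++ β) ∧
      (∀ s ∈ β, Productive g s) ∧ w = α.map lift ++ t ∧
      (t = [nonterminal (Sum.inr C)] ∨ t = [] ∧ C = A) := by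
  induction h with
  | refl => exact ⟨[], A, [], _, by simpa using Relation.ReflTransGen.refl, by simp, rfl, .inl rfl⟩
  | tail _ hstep ih =>
    obtain ⟨α, C, β, t, hd, hβ, rfl, ht⟩ := ih
    obtain ⟨ρ, hρ, hrw⟩ := hstep
    obtain ⟨r, hr, rfl⟩ | ⟨r, hr, γ₁, D, γ₂, ho, hγ, rfl⟩ | rfl := mem_rules.1 hρ
    · have hnot : nonterminal (Sum.inl r.input) ∉ t := by
        obtain rfl | ⟨rfl, -⟩ := ht <;> simp
      obtain ⟨α', h1, rfl⟩ := rewrites_liftRule hnot hrw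
      refine ⟨α', C, β, t, hd.trans_produces ⟨r, hr, ?_⟩, hβ, rfl, ht⟩
      exact (h1.append_right _).append_right _
    · obtain ⟨t', h1, rfl⟩ := rewrites_marked rfl hrw
      obtain rfl | ⟨rfl, -⟩ := ht
      · obtain ⟨h2, rfl⟩ := rewrites_singleton h1
        obtain rfl : C = r.input := by simpa using h2
        refine ⟨α ++ γ₁, D, γ₂ ++ β, [nonterminal (Sum.inr D)], ?_, ?_, by simp, .inl rfl⟩
        · have := r.rewrites_of_exists_parts α β
          rw [ho] at this
          exact hd.trans_produces ⟨r, hr, by simpa using this⟩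
        · intro s hs
          exact (List.mem_append.1 hs).elim (hγ s) (hβ s)
      · cases h1
    · obtain ⟨t', h1, rfl⟩ := rewrites_marked rfl hrw
      obtain rfl | ⟨rfl, -⟩ := ht
      · obtain ⟨h2, rfl⟩ := rewrites_singleton h1
        obtain rfl : C = A := by simpa using h2
        exact ⟨α, C, β, [], hd, hβ, rfl, .inr ⟨rfl, rfl⟩⟩
      · cases h1

end PumpPrefix

open PumpPrefix in
/-- for a context-free grammar `G` and a nonterminal `A`, the language
`{ u | ∃ v, A ⇒* u A v }` is context-free. -/
theorem pump_prefix_language_isContextFree {T : Type} (g : ContextFreeGrammar T) (A : g.NT) :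
    Language.IsContextFree { u : List T | ∃ v : List T,
      g.Derives [Symbol.nonterminal A]
        (u.map Symbol.terminal ++ [Symbol.nonterminal A] ++ v.map Symbol.terminal) } := by
  refine ⟨spineGrammar g A, Set.ext fun u => ⟨fun h => ?_, ?_⟩⟩
  · obtain ⟨α, C, β, t, hd, hβ, hw, ht⟩ := exists_of_derives_spine (g := g) (A := A) h
    -- a terminal word contains no marked symbol, so the spine has been closed
    obtain rfl | ⟨rfl, rfl⟩ := ht
    · have hmem : (Symbol.nonterminal (Sum.inr C) : Symbol T (g.NT ⊕ g.NT)) ∈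
          u.map Symbol.terminal := hw ▸ (by simp)
      simp at hmem
    · obtain rfl : u.map Symbol.terminal = α := by
        apply lift_injective.list_map
        rw [map_lift_terminal]
        exact hw.trans (List.append_nil _)
      obtain ⟨v, hv⟩ := exists_derives_of_productive hβ
      exact ⟨v, hd.trans (hv.append_left _)⟩
  · rintro ⟨v, hv⟩
    obtain ⟨α, C, β, hw, -, hd⟩ := exists_spine_of_derives hv
    obtain ⟨rfl, rfl, rfl⟩ : α = [] ∧ C = A ∧ β = [] := by
      cases α with
      | nil => simpa [eq_comm] using hw
      | cons x α => simp at hw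
    exact hd
end

section
/- Let G be a right-linear context-free grammar (every production has the form X → w or X → w Y where w is a list of terminal symbols and Y is a single nonterminal appearing at the end), and let A be a nonterminal of G. Then the language { u ∈ T* | there exists v ∈ T* such that [nonterminal A] derives (in G) the sentential form (map terminal u) ++ [nonterminal A] ++ (map terminal v) } is a regular language. -/
/-!
In a right-linear grammar every sentential form reachable from `A` is a terminal word followed by
at most one nonterminal. Hence `A ⇒* u A v` forces `v = []`, and `u` is the concatenation of the
terminal words along a cyclic path `A → w₁ X₁ → w₁ w₂ X₂ → ⋯ → u A` of rules
(`mem_reachLang_of_derives`, `derives_of_reach`). Let `R X` be the language of words that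
label paths from `X` to `A`.

Regularity follows from the Myhill–Nerode theorem. Consider the finite family of languages
`s * R Y`, where either `s` is a suffix of the terminal part of a rule with last nonterminal `Y`,
or `s = []` and `Y = A`. Removing a first letter from a word of a member of the family leads to a
word of another member (`exists_residual`), so each left quotient of `R A` is a union of members
(`isRegular_of_finite_residuals`), and there are only finitely many such unions.
-/

/-- If a finite family `F` of languages has the property that every word `a :: z` of a member `K`
comes from a member `K'` with `z ∈ K'` and `a · K' ⊆ K`, then all members of `F` are regular:
each left quotient is the union of the members of `F` it contains. -/
theorem isRegular_of_finite_residuals {T : Type} {F : Set (Language T)} (hF : F.Finite)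
    (hstep : ∀ K ∈ F, ∀ (a : T) (z : List T), a :: z ∈ K →
      ∃ K' ∈ F, z ∈ K' ∧ ∀ z' ∈ K', a :: z' ∈ K)
    {L : Language T} (hL : L ∈ F) : L.IsRegular := by
  have hword : ∀ (x : List T), ∀ K ∈ F, ∀ z : List T, x ++ z ∈ K →
      ∃ K' ∈ F, z ∈ K' ∧ ∀ z' ∈ K', x ++ z' ∈ K := by
    intro x
    induction x with
    | nil => exact fun K hK z hz => ⟨K, hK, hz, fun _ h => h⟩
    | cons a x ih =>
      intro K hK z hz
      obtain ⟨K₁, hK₁, hz₁, h₁⟩ := hstep K hK a (x ++ z) hz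
      obtain ⟨K₂, hK₂, hz₂, h₂⟩ := ih K₁ hK₁ z hz₁
      exact ⟨K₂, hK₂, hz₂, fun z' hz' => h₁ _ (h₂ z' hz')⟩
  rw [Language.isRegular_iff_finite_range_leftQuotient]
  refine (hF.finite_subsets.image fun S : Set (Language T) =>
    ({z | ∃ K ∈ S, z ∈ K} : Language T)).subset ?_
  rintro _ ⟨x, rfl⟩
  refine ⟨{K | K ∈ F ∧ ∀ z ∈ K, x ++ z ∈ L}, fun K hK => hK.1, ?_⟩
  ext z
  constructor
  · rintro ⟨K, ⟨-, hK⟩, hz⟩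
    exact hK z hz
  · intro hz
    obtain ⟨K, hK, hzK, h⟩ := hword x L hL z hz
    exact ⟨K, ⟨hK, h⟩, hzK⟩

section RightLinear

variable {T : Type} (g : ContextFreeGrammar T) (A : g.NT)

/-- `Reach g A X u` means that `u` is the concatenation of the terminal words along a path of rules
of the form `X → w Y` leading from `X` to `A`. -/
inductive Reach : g.NT → List T → Prop
  | nil : Reach A []
  | step (r : ContextFreeRule T g.NT) (hr : r ∈ g.rules) (w : List T) (Y : g.NT)
      (hout : r.output = w.map Symbol.terminal ++ [Symbol.nonterminal Y]) (u : List T)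
      (hu : Reach Y u) : Reach r.input (w ++ u)

/-- The language of all words `s ++ u` where `u` labels a path from `Y` to `A`. -/
def reachLang (s : List T) (Y : g.NT) : Language T :=
  {x | ∃ u, Reach g A Y u ∧ x = s ++ u}

/-- The family of languages `reachLang g A s Y` where `s` is a suffix of the terminal part of a rule
ending in `Y`, or `s = []` and `Y = A`. -/
def residuals : Set (Language T) :=
  insert (reachLang g A [] A)
    {K | ∃ r ∈ g.rules, ∃ (p s : List T) (Y : g.NT),
      r.output = (p ++ s).map Symbol.terminal ++ [Symbol.nonterminal Y] ∧ K = reachLang g A s Y}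

variable {g A}

theorem split_unique {N : Type} {w u : List T} {X Y : N} {q q' : List (Symbol T N)}
    (h : w.map Symbol.terminal ++ Symbol.nonterminal X :: q =
      u.map Symbol.terminal ++ Symbol.nonterminal Y :: q') : w = u ∧ X = Y ∧ q = q' := by
  induction w generalizing u with
  | nil => cases u <;> simp_all
  | cons a w ih =>
    cases u with
    | nil => simp at h
    | cons b u =>
      simp only [List.map_cons, List.cons_append, List.cons.injEq, Symbol.terminal.injEq] at h
      obtain ⟨rfl, h⟩ := h
      obtain ⟨rfl, hq⟩ := ih h
      exact ⟨rfl, hq⟩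

theorem rewrites_linear {N : Type} {r : ContextFreeRule T N} {w : List T} {X : N}
    {t : List (Symbol T N)}
    (h : r.Rewrites (w.map Symbol.terminal ++ [Symbol.nonterminal X]) t) :
    r.input = X ∧ t = w.map Symbol.terminal ++ r.output := by
  induction w generalizing t with
  | nil =>
    cases h with
    | head => simp
    | cons _ h => cases h
  | cons a w ih =>
    cases h with
    | cons _ h =>
      obtain ⟨rfl, rfl⟩ := ih h
      simp

theorem finite_residuals : (residuals g A).Finite := by
  classical
  refine Set.Finite.insert _ ?_
  -- The output of a rule and the length of the prefix `p` determine `s` and `Y`.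
  have hfin : (⋃ r ∈ g.rules, ⋃ n ∈ Finset.range (r.output.length + 1),
      {K : Language T | ∃ (p s : List T) (Y : g.NT), p.length = n ∧
        r.output = (p ++ s).map Symbol.terminal ++ [Symbol.nonterminal Y] ∧
        K = reachLang g A s Y}).Finite := by
    refine Set.Finite.biUnion g.rules.finite_toSet fun r _ =>
      Set.Finite.biUnion (Finset.finite_toSet _) fun n _ => Set.Subsingleton.finite ?_
    rintro _ ⟨p, s, Y, hp, ho, rfl⟩ _ ⟨p', s', Y', hp', ho', rfl⟩
    obtain ⟨h, rfl, -⟩ := split_unique (ho.symm.trans ho')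
    obtain ⟨-, rfl⟩ := List.append_inj h (hp.trans hp'.symm)
    rfl
  refine hfin.subset ?_
  rintro K ⟨r, hr, p, s, Y, ho, hK⟩
  simp only [Set.mem_iUnion]
  refine ⟨r, hr, p.length, ?_, p, s, Y, rfl, ho, hK⟩
  simp [ho]

/-- A nonempty path label starts inside the first rule of the path with nonempty terminal part. -/
theorem exists_residual_of_reach {X : g.NT} {x : List T} (hx : Reach g A X x) (a : T)
    (z : List T) (hz : x = a :: z) :
    ∃ K ∈ residuals g A, z ∈ K ∧ ∀ z' ∈ K, Reach g A X (a :: z') := by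
  induction hx with
  | nil => simp at hz
  | step r hr w Y hout u hu ih =>
    cases w with
    | nil =>
      obtain ⟨K, hK, hzK, h⟩ := ih hz
      exact ⟨K, hK, hzK, fun z' hz' => Reach.step r hr [] Y hout _ (h z' hz')⟩
    | cons b w =>
      obtain ⟨rfl, rfl⟩ := List.cons.inj hz
      refine ⟨reachLang g A w Y, Or.inr ⟨r, hr, [b], w, Y, hout, rfl⟩, ⟨u, hu, rfl⟩, ?_⟩
      rintro _ ⟨u', hu', rfl⟩
      exact Reach.step r hr (b :: w) Y hout u' hu'

theorem exists_residual {K : Language T} (hK : K ∈ residuals g A) (a : T) (z : List T)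
    (hz : a :: z ∈ K) : ∃ K' ∈ residuals g A, z ∈ K' ∧ ∀ z' ∈ K', a :: z' ∈ K := by
  have hnil : ∀ Y : g.NT, a :: z ∈ reachLang g A [] Y →
      ∃ K' ∈ residuals g A, z ∈ K' ∧ ∀ z' ∈ K', a :: z' ∈ reachLang g A [] Y := by
    rintro Y ⟨u, hu, h⟩
    obtain ⟨K', hK', hzK', h'⟩ := exists_residual_of_reach hu a z h.symm
    exact ⟨K', hK', hzK', fun z' hz' => ⟨_, h' z' hz', rfl⟩⟩
  obtain rfl | ⟨r, hr, p, s, Y, hout, rfl⟩ := hK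
  · exact hnil A hz
  · cases s with
    | nil => exact hnil Y hz
    | cons b s =>
      obtain ⟨u, hu, h⟩ := hz
      obtain ⟨rfl, rfl⟩ := List.cons.inj h
      refine ⟨reachLang g A s Y, Or.inr ⟨r, hr, p ++ [a], s, Y, by simpa using hout, rfl⟩,
        ⟨u, hu, rfl⟩, ?_⟩
      rintro _ ⟨u', hu', rfl⟩
      exact ⟨u', hu', rfl⟩

theorem derives_of_reach {X : g.NT} {u : List T} (h : Reach g A X u) :
    g.Derives [Symbol.nonterminal X] (u.map Symbol.terminal ++ [Symbol.nonterminal A]) := by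
  induction h with
  | nil => exact .refl _
  | step r hr w Y hout u hu ih =>
    have h₁ : g.Produces [Symbol.nonterminal r.input]
        (w.map Symbol.terminal ++ [Symbol.nonterminal Y]) :=
      ⟨r, hr, hout ▸ ContextFreeRule.Rewrites.input_output⟩
    simpa using h₁.trans_derives (ih.append_left (w.map Symbol.terminal))

/-- In a right-linear grammar, a derivation leading to a form `u A v` only lengthens the terminal
prefix, along a path of rules ending in `A`. A form without nonterminals cannot occur on the way,
since no rule applies to it; this is carried along as the second half of the induction. -/
theorem mem_reachLang_of_derives
    (hlin : ∀ r ∈ g.rules, ∃ w : List T,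
      r.output = w.map Symbol.terminal ∨
      ∃ Y : g.NT, r.output = w.map Symbol.terminal ++ [Symbol.nonterminal Y])
    {u v : List T} {t : List (Symbol T g.NT)}
    (h : g.Derives t (u.map Symbol.terminal ++ [Symbol.nonterminal A] ++ v.map Symbol.terminal)) :
    (∀ (w : List T) (X : g.NT), t = w.map Symbol.terminal ++ [Symbol.nonterminal X] →
      u ∈ reachLang g A w X) ∧ ∀ w : List T, t ≠ w.map Symbol.terminal := by
  induction h using Relation.ReflTransGen.head_induction_on with
  | refl =>
    constructor
    · intro w X h
      rw [List.append_assoc] at h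
      obtain ⟨rfl, rfl, -⟩ := split_unique h
      exact ⟨[], .nil, by simp⟩
    · intro w h
      have : Symbol.nonterminal A ∈ w.map (Symbol.terminal (N := g.NT)) := by
        rw [← h]; simp
      simp at this
  | head hp _ ih =>
    obtain ⟨r, hr, hrw⟩ := hp
    constructor
    · rintro w X rfl
      obtain ⟨rfl, rfl⟩ := rewrites_linear hrw
      obtain ⟨w', hout | ⟨Y, hout⟩⟩ := hlin r hr
      · exact absurd (by simp [hout]) (ih.2 (w ++ w'))
      · obtain ⟨u', hu', rfl⟩ := ih.1 (w ++ w') Y (by simp [hout])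
        exact ⟨w' ++ u', .step r hr w' Y hout u' hu', by simp⟩
    · rintro w rfl
      simpa using hrw.nonterminal_input_mem

end RightLinear


/-- if `G` is a right-linear context-free grammar
(every production's right-hand side is a list of terminals optionally followed by a single
nonterminal at the end), then for every nonterminal `A` the language
`{ u | ∃ v, A ⇒* u A v }` is regular. -/
theorem pump_prefix_language_isRegular_of_rightLinear {T : Type} (g : ContextFreeGrammar T)
    (hlin : ∀ r ∈ g.rules, ∃ w : List T,
      r.output = w.map Symbol.terminal ∨
      ∃ Y : g.NT, r.output = w.map Symbol.terminal ++ [Symbol.nonterminal Y])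
    (A : g.NT) :
    Language.IsRegular { u : List T | ∃ v : List T,
      g.Derives [Symbol.nonterminal A]
        (u.map Symbol.terminal ++ [Symbol.nonterminal A] ++ v.map Symbol.terminal) } := by
  have hreg := isRegular_of_finite_residuals (finite_residuals (g := g) (A := A))
    (fun _ hK a z => exists_residual hK a z) (Set.mem_insert (reachLang g A [] A) _)
  refine (congrArg Language.IsRegular (Set.ext fun u => ?_)).mpr hreg
  constructor
  · rintro ⟨v, h⟩
    exact (mem_reachLang_of_derives hlin h).1 [] A rfl
  · rintro ⟨u, hu, rfl⟩
    -- The word after `A` can be taken empty.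
    exact ⟨[], by simpa using derives_of_reach hu⟩
end

section
/- Let G be a context-free grammar with finitely many nonterminals in which every nonterminal derives at least one terminal word. Then there exists a constant C ∈ ℕ (depending only on G) such that for every nonterminal A and all terminal words u, v with [nonterminal A] ⇒* (map terminal u) ++ [nonterminal A] ++ (map terminal v), there exists a terminal word v′ with |v′| ≤ C·(|u| + 1) and [nonterminal A] ⇒* (map terminal u) ++ [nonterminal A] ++ (map terminal v′). -/
/-!
In a derivation tree of `A ⇒* u A v`, follow the spine from the root `A` to the distinguished
leaf `A`. A spine step applies a rule `X → α Y β`, where `α` produces a (possibly empty) factor of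
`u`. The part `β` to the right of the spine may be replaced by any terminal word that it derives,
and such a word can be chosen of length at most a constant `M`, as there are finitely many rules.
A maximal stretch of spine steps contributing nothing to `u` witnesses `X ⇒* Y w` for a terminal
word `w`; as there are finitely many pairs `(X, Y)`, one such `w` can be fixed for each pair, of
length at most a constant `K`. At most `|u|` spine steps contribute letters to `u`, and they are
separated by at most `|u| + 1` silent stretches, so `C = M + K` works.

The spine is never built explicitly: `ShortRight` records what is known about its lower end, and
`exists_shortRight` carries this up the derivation, one rewriting step at a time.
-/

namespace ContextFreeGrammar

variable {T : Type} {g : ContextFreeGrammar T}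

/-- Locates a marked letter of a concatenation in one of the two factors. -/
lemma append_eq_append_cons {A : Type*} {x y α β : List A} {e : A} (h : x ++ y = α ++ e :: β) :
    (∃ a, α = x ++ a ∧ y = a ++ e :: β) ∨ ∃ c, x = α ++ e :: c ∧ β = c ++ y := by
  rcases List.append_eq_append_iff.1 h with h | ⟨c, h₁, h₂⟩
  · exact .inl h
  · cases c with
    | nil => exact .inl ⟨[], by simpa using h₁.symm, by simpa using h₂.symm⟩
    | cons d c =>
      simp only [List.cons_append, List.cons.injEq] at h₂
      exact .inr ⟨c, by rw [h₁, h₂.1], h₂.2⟩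

/-- A derivation from a concatenation splits into derivations from the two factors. -/
lemma Derives.exists_split {x y z : List (Symbol T g.NT)} (h : g.Derives (x ++ y) z) :
    ∃ z₁ z₂, z = z₁ ++ z₂ ∧ g.Derives x z₁ ∧ g.Derives y z₂ := by
  induction h with
  | refl => exact ⟨x, y, rfl, .refl _, .refl _⟩
  | tail _ last ih =>
    obtain ⟨z₁, z₂, rfl, h₁, h₂⟩ := ih
    obtain ⟨r, hr, hrw⟩ := last
    obtain ⟨p, q, hpq, rfl⟩ := hrw.exists_parts
    rw [List.append_assoc, List.singleton_append] at hpq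
    rcases append_eq_append_cons hpq with ⟨a, rfl, rfl⟩ | ⟨c, rfl, rfl⟩
    · refine ⟨z₁, a ++ r.output ++ q, by simp, h₁, h₂.trans_produces ⟨r, hr, ?_⟩⟩
      simpa using r.rewrites_of_exists_parts a q
    · refine ⟨p ++ r.output ++ c, z₂, by simp, h₁.trans_produces ⟨r, hr, ?_⟩, h₂⟩
      simpa using r.rewrites_of_exists_parts p c

lemma Derives.append {x y x' y' : List (Symbol T g.NT)} (hx : g.Derives x x')
    (hy : g.Derives y y') : g.Derives (x ++ y) (x' ++ y') :=
  (hx.append_right y).trans (hy.append_left x')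

/-- The terminal word obtained from a sentential form by substituting the word `x B` for every
nonterminal `B`. -/
def expand (x : g.NT → List T) (s : List (Symbol T g.NT)) : List T :=
  s.flatMap fun a => match a with
    | .terminal t => [t]
    | .nonterminal B => x B

lemma derives_expand {x : g.NT → List T}
    (hx : ∀ B, g.Derives [.nonterminal B] ((x B).map .terminal)) (s : List (Symbol T g.NT)) :
    g.Derives s ((expand x s).map .terminal) := by
  induction s with
  | nil => exact .refl _
  | cons a s ih =>
    have ha : g.Derives [a] ((expand x [a]).map .terminal) := by
      cases a with
      | terminal t => exact .refl _
      | nonterminal B => simpa [expand] using hx B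
    simpa [expand] using ha.append ih

/-- `g.ShortRight C B Y u` says that `Y ⇒* Y' w` for some nonterminal `Y'` and terminal word `w`,
where `Y' ⇒* u B v` for a terminal word `v` with `|v| ≤ C * |u|`. No bound is put on `w`: it belongs
to a silent stretch of the spine that may still grow upwards, and is bounded once the stretch
ends. -/
def ShortRight (g : ContextFreeGrammar T) (C : ℕ) (B Y : g.NT) (u : List T) : Prop :=
  ∃ (Y' : g.NT) (w v : List T),
    g.Derives [.nonterminal Y] ([.nonterminal Y'] ++ w.map .terminal) ∧
    g.Derives [.nonterminal Y'] (u.map .terminal ++ [.nonterminal B] ++ v.map .terminal) ∧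
    v.length ≤ C * u.length

/-- Silent stretches of the spine have right parts of bounded length. -/
lemma exists_silent_bound (g : ContextFreeGrammar T) [Finite g.NT] :
    ∃ K : ℕ, ∀ (X Y : g.NT) (w : List T),
      g.Derives [.nonterminal X] ([.nonterminal Y] ++ w.map .terminal) →
      ∃ w' : List T, w'.length ≤ K ∧
        g.Derives [.nonterminal X] ([.nonterminal Y] ++ w'.map .terminal) := by
  have h : ∀ p : g.NT × g.NT, ∃ w' : List T, (∃ w : List T,
      g.Derives [.nonterminal p.1] ([.nonterminal p.2] ++ w.map .terminal)) →
        g.Derives [.nonterminal p.1] ([.nonterminal p.2] ++ w'.map .terminal) := by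
    intro p
    by_cases hp : ∃ w : List T,
      g.Derives [.nonterminal p.1] ([.nonterminal p.2] ++ w.map .terminal)
    · exact hp.imp fun w hw _ => hw
    · exact ⟨[], fun h => absurd h hp⟩
  choose f hf using h
  obtain ⟨K, hK⟩ := Finite.exists_le fun p => (f p).length
  exact ⟨K, fun X Y w hw => ⟨f (X, Y), hK (X, Y), hf (X, Y) ⟨w, hw⟩⟩⟩

/-- In a sentential form deriving `u B z`, some nonterminal `Y` is the ancestor of `B`; the part to
its left produces a prefix of `u`, and `Y` derives the rest of `u` followed by `B` with a short
right part, up to a silent stretch. By induction on the derivation from its end: a rewriting step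
either leaves the spine alone or, read backwards, extends it upwards by one rule. -/
lemma exists_shortRight {M K : ℕ}
    (hM : ∀ r ∈ g.rules, ∀ (α β : List (Symbol T g.NT)) (Y : g.NT),
      r.output = α ++ .nonterminal Y :: β →
      ∃ b : List T, b.length ≤ M ∧ g.Derives β (b.map .terminal))
    (hK : ∀ (X Y : g.NT) (w : List T),
      g.Derives [.nonterminal X] ([.nonterminal Y] ++ w.map .terminal) →
      ∃ w' : List T, w'.length ≤ K ∧
        g.Derives [.nonterminal X] ([.nonterminal Y] ++ w'.map .terminal))
    {B : g.NT} {u : List T} {z s : List (Symbol T g.NT)}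
    (h : g.Derives s (u.map .terminal ++ [.nonterminal B] ++ z)) :
    ∃ (α β : List (Symbol T g.NT)) (Y : g.NT) (u₁ u₂ : List T),
      s = α ++ .nonterminal Y :: β ∧ u = u₁ ++ u₂ ∧ g.Derives α (u₁.map .terminal) ∧
      g.ShortRight (M + K) B Y u₂ := by
  induction h using Relation.ReflTransGen.head_induction_on with
  | refl =>
    exact ⟨u.map .terminal, z, B, u, [], by simp, by simp, .refl _, B, [], [],
      .refl _, .refl _, by simp⟩
  | head hs _ ih =>
    obtain ⟨α, β, Y, u₁, u₂, hs', rfl, hα, hY⟩ := ih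
    obtain ⟨r, hr, hrw⟩ := hs
    obtain ⟨p, q, rfl, rfl⟩ := hrw.exists_parts
    rw [List.append_assoc] at hs'
    -- The spine symbol `Y` lies in `p`, in the output of the rule, or in `q`.
    rcases append_eq_append_cons hs' with ⟨a, rfl, ha⟩ | ⟨c, rfl, -⟩
    · rcases append_eq_append_cons ha with ⟨d, rfl, rfl⟩ | ⟨d, hd, -⟩
      · refine ⟨p ++ [.nonterminal r.input] ++ d, β, Y, u₁, u₂, by simp, rfl, ?_, hY⟩
        refine Produces.trans_derives ⟨r, hr, r.rewrites_of_exists_parts p d⟩ ?_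
        simpa using hα
      · obtain ⟨z₁, z₂, hz, h₁, h₂⟩ := hα.exists_split
        obtain ⟨x, y, rfl, rfl, rfl⟩ := List.map_eq_append_iff.1 hz
        refine ⟨p, q, r.input, x, y ++ u₂, by simp, by simp, h₁, ?_⟩
        obtain ⟨Y', w, v, hw, hv, hlen⟩ := hY
        obtain ⟨b, hb, hdb⟩ := hM r hr a d Y hd
        have hstep : g.Derives [.nonterminal r.input]
            (y.map .terminal ++ ([.nonterminal Y] ++ b.map .terminal)) := by
          refine Produces.trans_derives ⟨r, hr, .input_output⟩ ?_
          rw [hd]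
          exact h₂.append (hdb.append_left [.nonterminal Y])
        by_cases hy : y = []
        · subst hy
          refine ⟨Y', w ++ b, v, ?_, by simpa using hv, by simpa using hlen⟩
          refine Derives.trans (by simpa using hstep) (?_ : g.Derives
            ([.nonterminal Y] ++ b.map .terminal) _)
          simpa using hw.append_right (b.map .terminal)
        -- The step contributes a letter to `u`, which pays for `b` and for the silent stretch.
        · have hy1 : 1 ≤ y.length := List.length_pos_iff.2 hy
          obtain ⟨w', hw', hdw⟩ := hK Y Y' w hw
          refine ⟨r.input, [], v ++ w' ++ b, .refl _, ?_, ?_⟩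
          · refine hstep.trans ?_
            have := (((hdw.trans (hv.append_right _)).append_right
              (b.map Symbol.terminal)).append_left (y.map Symbol.terminal))
            simpa using this
          · simp only [List.length_append]
            nlinarith [Nat.mul_le_mul_left (M + K) hy1]
    · exact ⟨α, c ++ [.nonterminal r.input] ++ q, Y, u₁, u₂, by simp, rfl, hα, hY⟩

end ContextFreeGrammar

/-- let `G` be a context-free grammar with finitely many nonterminals in which
every nonterminal derives some terminal word. Then there is a constant `C` such that whenever
`A ⇒* u A v` for terminal words `u, v`, there is a terminal word `v'` with
`|v'| ≤ C * (|u| + 1)` and `A ⇒* u A v'`. -/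
theorem pump_with_short_right_part {T : Type} (g : ContextFreeGrammar T) [Fintype g.NT]
    (hterm : ∀ B : g.NT, ∃ x : List T,
      g.Derives [Symbol.nonterminal B] (x.map Symbol.terminal)) :
    ∃ C : ℕ, ∀ (A : g.NT) (u v : List T),
      g.Derives [Symbol.nonterminal A]
        (u.map Symbol.terminal ++ [Symbol.nonterminal A] ++ v.map Symbol.terminal) →
      ∃ v' : List T, v'.length ≤ C * (u.length + 1) ∧
        g.Derives [Symbol.nonterminal A]
          (u.map Symbol.terminal ++ [Symbol.nonterminal A] ++ v'.map Symbol.terminal) := by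
  obtain ⟨K, hK⟩ := g.exists_silent_bound
  choose x hx using hterm
  let M := g.rules.sup fun r => (ContextFreeGrammar.expand x r.output).length
  have hM : ∀ r ∈ g.rules, ∀ (α β : List (Symbol T g.NT)) (Y : g.NT),
      r.output = α ++ .nonterminal Y :: β →
      ∃ b : List T, b.length ≤ M ∧ g.Derives β (b.map .terminal) := by
    intro r hr α β Y h
    refine ⟨_, ?_, ContextFreeGrammar.derives_expand hx β⟩
    refine le_trans ?_ (Finset.le_sup (f := fun r : ContextFreeRule T g.NT =>
      (ContextFreeGrammar.expand x r.output).length) hr)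
    simp only [h, ContextFreeGrammar.expand, List.flatMap_append, List.flatMap_cons,
      List.length_append]
    omega
  refine ⟨M + K, fun A u v h => ?_⟩
  obtain ⟨α, β, Y, u₁, u₂, hs, rfl, hα, Y', w, v', hw, hv, hlen⟩ :=
    ContextFreeGrammar.exists_shortRight hM hK h
  -- The sentential form at the root is the single symbol `A`, so nothing surrounds the spine.
  cases α with
  | cons a α => simp at hs
  | nil =>
    simp only [List.nil_append, List.cons.injEq, Symbol.nonterminal.injEq] at hs
    obtain ⟨rfl, rfl⟩ := hs
    have hu₁ : u₁ = [] := by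
      rcases hα.eq_or_head with h | ⟨_, h, -⟩
      · simpa using h.symm
      · obtain ⟨_, _, h⟩ := h.exists_nonterminal_input_mem
        simp at h
    subst hu₁
    obtain ⟨w', hw', hdw⟩ := hK A Y' w hw
    refine ⟨v' ++ w', ?_, ?_⟩
    · simp only [List.length_append, List.nil_append]
      nlinarith
    · simpa using hdw.trans (hv.append_right (w'.map Symbol.terminal))
end

section
/- Euler-type characterization of terminal derivations of a context-free grammar: let G be a context-free grammar with finite nonterminal set N, finite production set P, and start symbol S, and let f : P → ℕ. Then there exist a terminal word w and a derivation of w from S that uses each production p ∈ P exactly f(p) times if and only if both of the following hold: (i) flow condition: for every nonterminal B ∈ N, (1 if B = S else 0) + Σ_{p ∈ P} f(p)·(number of occurrences of B in the right-hand side of p) = Σ_{p ∈ P, lhs(p) = B} f(p); and (ii) connectivity: for every production p with f(p) > 0, the nonterminal lhs(p) is reachable from S in the directed graph on N whose edges are the pairs (lhs(q), C) for productions q with f(q) > 0 and nonterminals C occurring in the right-hand side of q. -/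
/-!
Both conditions make sense for an arbitrary sentential form `u` in place of `[S]`: the number of
occurrences of `B` in `u` plus the number produced by `f` equals the number consumed by `f`
(`HasFlow`), and every used left-hand side is reachable from some nonterminal of `u` (`Connected`).
Both are preserved when a derivation is extended by a step at its front, which gives necessity.

For sufficiency one derives greedily from `u`, by induction on the total number of uses. If some
production is still to be used, connectivity provides a nonterminal `B` in `u`, and the flow
condition provides a production with left-hand side `B` still to be used. The flow condition
survives any choice; the point is to choose a production `p` that keeps the rest connected. Every path of
the graph can be cut after its last edge with source `B` (`Reaches.decompose`), and the edges with
source other than `B` are unaffected by the step. Hence connectivity survives as soon as `B` is no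
longer needed or is reachable from the new sentential form (`Connected.of_step`). If `B` is still
needed, then by the flow condition either `B` occurs in `u` a second time or some used production
`q` has `B` on its right-hand side. In the latter case a path from `u` to the left-hand side of
`q`, cut after its last edge with source `B`, shows which `p` to apply: the production of that
edge, `q` itself if its left-hand side is `B`, and otherwise any (`exists_good_step`).
Once no production is left, the flow condition says that the sentential form is terminal.
-/

open scoped Classical

/-- A derivation (in a context-free grammar with rule set `P`) from `u` to `w` in which the
function `f` records exactly how many times each production is applied. -/
inductive DerivesWithCount {T N : Type} (P : Finset (ContextFreeRule T N)) :
    List (Symbol T N) → List (Symbol T N) → (ContextFreeRule T N → ℕ) → Prop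
  | refl (w : List (Symbol T N)) : DerivesWithCount P w w (fun _ => 0)
  | step {w : List (Symbol T N)} {f : ContextFreeRule T N → ℕ}
      (r : ContextFreeRule T N) (hr : r ∈ P) (x y : List (Symbol T N))
      (h : DerivesWithCount P (x ++ r.output ++ y) w f) :
      DerivesWithCount P (x ++ [Symbol.nonterminal r.input] ++ y) w
        (fun q => f q + if q = r then 1 else 0)

section Helpers

variable {T N : Type}

/-! ### The two conditions for a sentential form -/

/-- The edge relation on nonterminals induced by the productions that `f` uses. -/
def UsedEdge (P : Finset (ContextFreeRule T N)) (f : ContextFreeRule T N → ℕ) (B C : N) : Prop :=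
  ∃ q ∈ P, 0 < f q ∧ q.input = B ∧ Symbol.nonterminal C ∈ q.output

/-- The nonterminal `D` is reachable, along used productions, from a nonterminal of `u`. -/
def Reaches (P : Finset (ContextFreeRule T N)) (f : ContextFreeRule T N → ℕ)
    (u : List (Symbol T N)) (D : N) : Prop :=
  ∃ C, Symbol.nonterminal C ∈ u ∧ Relation.ReflTransGen (UsedEdge P f) C D

/-- The connectivity condition, relative to the sentential form `u`. -/
def Connected (P : Finset (ContextFreeRule T N)) (f : ContextFreeRule T N → ℕ)
    (u : List (Symbol T N)) : Prop :=
  ∀ r ∈ P, 0 < f r → Reaches P f u r.input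

/-- The flow condition, relative to the sentential form `u`. -/
def HasFlow (P : Finset (ContextFreeRule T N)) (f : ContextFreeRule T N → ℕ)
    (u : List (Symbol T N)) : Prop :=
  ∀ B : N, u.count (Symbol.nonterminal B) +
      ∑ r ∈ P, f r * r.output.count (Symbol.nonterminal B) =
    ∑ r ∈ P, if r.input = B then f r else 0

/-- The counting function `f` with one more use of the production `p`. -/
noncomputable def addUse (f : ContextFreeRule T N → ℕ) (p : ContextFreeRule T N) :
    ContextFreeRule T N → ℕ :=
  fun q => f q + if q = p then 1 else 0

/-! ### Necessity -/

/-- Applying a production changes both sides of the flow condition by the same amount. -/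
lemma flow_addUse_iff {P : Finset (ContextFreeRule T N)} {f : ContextFreeRule T N → ℕ}
    {p : ContextFreeRule T N} (hp : p ∈ P) (x y : List (Symbol T N)) :
    HasFlow P (addUse f p) (x ++ [Symbol.nonterminal p.input] ++ y) ↔
      HasFlow P f (x ++ p.output ++ y) := by
  refine forall_congr' fun B => ?_
  have h1 : ∑ r ∈ P, addUse f p r * r.output.count (Symbol.nonterminal B) =
      ∑ r ∈ P, f r * r.output.count (Symbol.nonterminal B) +
        p.output.count (Symbol.nonterminal B) := by
    simp [addUse, add_mul, Finset.sum_add_distrib, hp]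
  have h2 : (∑ r ∈ P, if r.input = B then addUse f p r else 0) =
      (∑ r ∈ P, if r.input = B then f r else 0) + if p.input = B then 1 else 0 := by
    have : ∀ r : ContextFreeRule T N, (if r.input = B then addUse f p r else 0) =
        (if r.input = B then f r else 0) +
          if r = p then (if p.input = B then 1 else 0) else 0 := by
      intro r
      by_cases h : r = p
      · subst h; by_cases h' : r.input = B <;> simp [addUse, h']
      · simp [addUse, h]
    simp_rw [this]
    simp [Finset.sum_add_distrib, hp]
  have h3 : ([Symbol.nonterminal p.input] : List (Symbol T N)).count (Symbol.nonterminal B) =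
      if p.input = B then 1 else 0 := by
    by_cases h : p.input = B <;> simp [h]
  rw [h1, h2]
  simp only [List.count_append, h3]
  omega

lemma Connected.addUse {P : Finset (ContextFreeRule T N)} {f : ContextFreeRule T N → ℕ}
    {p : ContextFreeRule T N} (hp : p ∈ P) {x y : List (Symbol T N)}
    (h : Connected P f (x ++ p.output ++ y)) :
    Connected P (addUse f p) (x ++ [Symbol.nonterminal p.input] ++ y) := by
  intro r hr hfr
  by_cases hrp : r = p
  · subst hrp
    exact ⟨r.input, by simp, .refl⟩
  · have hfr' : 0 < f r := by simpa [_root_.addUse, hrp] using hfr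
    obtain ⟨C, hC, hCD⟩ := h r hr hfr'
    have hCD' : Relation.ReflTransGen (UsedEdge P (_root_.addUse f p)) C r.input := by
      refine Relation.ReflTransGen.mono ?_ _ _ hCD
      rintro a b ⟨q, hq, hfq, h1, h2⟩
      exact ⟨q, hq, by unfold _root_.addUse; omega, h1, h2⟩
    simp only [List.mem_append] at hC
    rcases hC with (hC | hC) | hC
    · exact ⟨C, by simp [hC], hCD'⟩
    · exact ⟨p.input, by simp, .head ⟨p, hp, by simp [_root_.addUse], rfl, hC⟩ hCD'⟩
    · exact ⟨C, by simp [hC], hCD'⟩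

lemma DerivesWithCount.flow_and_connected {P : Finset (ContextFreeRule T N)}
    {u v : List (Symbol T N)} {f : ContextFreeRule T N → ℕ} (h : DerivesWithCount P u v f)
    (hv : ∀ B : N, Symbol.nonterminal B ∉ v) : HasFlow P f u ∧ Connected P f u := by
  induction h with
  | refl w =>
    refine ⟨fun B => ?_, fun r _ h => absurd h (lt_irrefl _)⟩
    simp [List.count_eq_zero.mpr (hv B)]
  | step r hr x y _ ih =>
    exact ⟨(flow_addUse_iff hr x y).2 (ih hv).1, (ih hv).2.addUse hr⟩

/-! ### Paths cut at a nonterminal -/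

/-- Edges of the graph of `f` whose source is not `B`. -/
def EdgeAvoiding (P : Finset (ContextFreeRule T N)) (f : ContextFreeRule T N → ℕ) (B : N)
    (C D : N) : Prop :=
  C ≠ B ∧ UsedEdge P f C D

/-- A path cut after its last edge with source `B`; in the first case it has no such edge. -/
lemma Reaches.decompose {P : Finset (ContextFreeRule T N)} {f : ContextFreeRule T N → ℕ}
    {u : List (Symbol T N)} {D : N} (B : N) (h : Reaches P f u D) :
    (∃ C, Symbol.nonterminal C ∈ u ∧ Relation.ReflTransGen (EdgeAvoiding P f B) C D) ∨
    (∃ p ∈ P, 0 < f p ∧ p.input = B ∧ ∃ C, Symbol.nonterminal C ∈ p.output ∧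
      Relation.ReflTransGen (EdgeAvoiding P f B) C D) := by
  obtain ⟨C, hC, hCD⟩ := h
  induction hCD with
  | refl => exact .inl ⟨C, hC, .refl⟩
  | @tail D E _ hDE ih =>
    by_cases hD : D = B
    · obtain ⟨p, hp, hfp, h1, h2⟩ := hDE
      exact .inr ⟨p, hp, hfp, h1.trans hD, E, h2, .refl⟩
    · rcases ih with ⟨C', h1, h2⟩ | ⟨p, hp, hfp, h0, C', h1, h2⟩
      · exact .inl ⟨C', h1, h2.tail ⟨hD, hDE⟩⟩
      · exact .inr ⟨p, hp, hfp, h0, C', h1, h2.tail ⟨hD, hDE⟩⟩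

lemma EdgeAvoiding.eq_of_reach {P : Finset (ContextFreeRule T N)} {f : ContextFreeRule T N → ℕ}
    {B D : N} (h : Relation.ReflTransGen (EdgeAvoiding P f B) B D) : D = B := by
  rcases h.cases_head with h | ⟨C, h, _⟩
  · exact h.symm
  · exact absurd rfl h.1

/-- Edges with source other than `p.input` do not depend on how often `p` is used. -/
lemma reach_of_avoiding {P : Finset (ContextFreeRule T N)} {f : ContextFreeRule T N → ℕ}
    {p : ContextFreeRule T N} {C D : N}
    (h : Relation.ReflTransGen (EdgeAvoiding P (addUse f p) p.input) C D) :
    Relation.ReflTransGen (UsedEdge P f) C D := by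
  refine Relation.ReflTransGen.mono ?_ _ _ h
  rintro a b ⟨hne, q, hq, hfq, h1, h2⟩
  have hqp : q ≠ p := by rintro rfl; exact hne h1.symm
  exact ⟨q, hq, by simpa [addUse, hqp] using hfq, h1, h2⟩

/-! ### Choosing the next production -/

lemma mem_step {x y v : List (Symbol T N)} {B C : N} (hne : C ≠ B)
    (h : Symbol.nonterminal C ∈ x ++ [Symbol.nonterminal B] ++ y) :
    Symbol.nonterminal C ∈ x ++ v ++ y := by
  simp only [List.mem_append, List.mem_singleton, Symbol.nonterminal.injEq] at h ⊢
  tauto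

/-- Connectivity survives the application of `p` if the left-hand side of `p` is either no longer
needed afterwards or reachable from the new sentential form. -/
lemma Connected.of_step {P : Finset (ContextFreeRule T N)} {f : ContextFreeRule T N → ℕ}
    {p : ContextFreeRule T N} {x y : List (Symbol T N)}
    (h : Connected P (_root_.addUse f p) (x ++ [Symbol.nonterminal p.input] ++ y))
    (hB : (∀ q ∈ P, q.input = p.input → f q = 0) ∨ Reaches P f (x ++ p.output ++ y) p.input) :
    Connected P f (x ++ p.output ++ y) := by
  intro r hr hfr
  by_cases hrB : r.input = p.input
  · rcases hB with hB | hB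
    · exact absurd (hB r hr hrB) hfr.ne'
    · rwa [hrB]
  rcases (h r hr (by unfold _root_.addUse; omega)).decompose p.input with
    ⟨C, hC, hCD⟩ | ⟨q, hq, hfq, hqB, C, hC, hCD⟩
  · have hne : C ≠ p.input := by
      rintro rfl
      exact hrB (EdgeAvoiding.eq_of_reach hCD)
    exact ⟨C, mem_step hne hC, reach_of_avoiding hCD⟩
  · by_cases hqp : q = p
    · subst hqp
      exact ⟨C, by simp [hC], reach_of_avoiding hCD⟩
    · have hfq' : 0 < f q := by simpa [_root_.addUse, hqp] using hfq
      rcases hB with hB | ⟨C', hC', hCB⟩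
      · exact absurd (hB q hq hqB) hfq'.ne'
      · exact ⟨C', hC', hCB.trans (.head ⟨q, hq, hfq', hqB, hC⟩ (reach_of_avoiding hCD))⟩

lemma exists_addUse {f : ContextFreeRule T N → ℕ} {p : ContextFreeRule T N} (h : 0 < f p) :
    ∃ g, f = addUse g p := by
  refine ⟨fun q => f q - if q = p then 1 else 0, funext fun q => ?_⟩
  by_cases hq : q = p
  · subst hq; simp only [addUse, if_true]; omega
  · simp [addUse, hq]

/-- Any occurrence of a nonterminal can be rewritten so that connectivity is kept. -/
lemma exists_good_step {P : Finset (ContextFreeRule T N)} {f : ContextFreeRule T N → ℕ}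
    {x y : List (Symbol T N)} {B : N}
    (hflow : HasFlow P f (x ++ [Symbol.nonterminal B] ++ y))
    (hconn : Connected P f (x ++ [Symbol.nonterminal B] ++ y)) :
    ∃ p ∈ P, p.input = B ∧ ∃ g, f = addUse g p ∧ Connected P g (x ++ p.output ++ y) := by
  have hpos : 0 < ∑ r ∈ P, if r.input = B then f r else 0 := by
    rw [← hflow B]
    simp only [List.count_append, List.count_singleton_self]
    omega
  obtain ⟨p, hp, hpf⟩ := Finset.exists_ne_zero_of_sum_ne_zero hpos.ne'
  obtain ⟨rfl, hfp⟩ : p.input = B ∧ f p ≠ 0 := by simpa using hpf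
  obtain ⟨g, rfl⟩ := exists_addUse (Nat.pos_of_ne_zero hfp)
  -- If the left-hand side of `p` is not needed after the step, `p` itself works.
  by_cases hdone : ∀ q ∈ P, q.input = p.input → g q = 0
  · exact ⟨p, hp, rfl, g, rfl, hconn.of_step (.inl hdone)⟩
  push Not at hdone
  obtain ⟨s, hs, hsB, hgs⟩ := hdone
  have hflow' := (flow_addUse_iff hp x y).1 hflow p.input
  have hpos' : 0 < ∑ r ∈ P, if r.input = p.input then g r else 0 :=
    Finset.sum_pos' (fun _ _ => Nat.zero_le _) ⟨s, hs, by simpa [hsB] using Nat.pos_of_ne_zero hgs⟩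
  by_cases hmem : Symbol.nonterminal p.input ∈ x ++ p.output ++ y
  · exact ⟨p, hp, rfl, g, rfl, hconn.of_step (.inr ⟨_, hmem, .refl⟩)⟩
  -- Since `p.input` does not occur in the new form, the flow condition makes it occur in the
  -- right-hand side of some production `q` that remains to be used.
  rw [List.count_eq_zero.mpr hmem, zero_add] at hflow'
  obtain ⟨q, hq, hqf⟩ := Finset.exists_ne_zero_of_sum_ne_zero (hflow' ▸ hpos'.ne')
  obtain ⟨hgq, hqc⟩ := mul_ne_zero_iff.1 hqf
  have hqB : Symbol.nonterminal p.input ∈ q.output := by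
    by_contra hcon
    exact hqc (List.count_eq_zero.mpr hcon)
  have hfq : 0 < addUse g p q := by unfold addUse; omega
  by_cases hqin : q.input = p.input
  · obtain ⟨g', hg'⟩ := exists_addUse hfq
    rw [hg', ← hqin] at hconn
    exact ⟨q, hq, hqin, g', hg', hconn.of_step (.inr ⟨q.input, by simp [hqin, hqB], .refl⟩)⟩
  rcases (hconn q hq hfq).decompose p.input with
    ⟨C, hC, hCD⟩ | ⟨t, ht, hft, htB, C, hC, hCD⟩
  · have hne : C ≠ p.input := by
      rintro rfl
      exact hqin (EdgeAvoiding.eq_of_reach hCD)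
    exact ⟨p, hp, rfl, g, rfl, hconn.of_step (.inr ⟨C, mem_step hne hC,
      (reach_of_avoiding hCD).tail ⟨q, hq, Nat.pos_of_ne_zero hgq, rfl, hqB⟩⟩)⟩
  · obtain ⟨g', hg'⟩ := exists_addUse hft
    rw [hg', ← htB] at hCD hconn
    have hpath := hCD.tail ⟨by rwa [htB], q, hq, by rwa [← hg'], rfl, hqB⟩
    refine ⟨t, ht, htB, g', hg', hconn.of_step (.inr ⟨C, by simp [hC], ?_⟩)⟩
    rw [htB]
    exact reach_of_avoiding hpath

/-! ### Sufficiency -/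

lemma eq_map_terminal {u : List (Symbol T N)} (h : ∀ B : N, Symbol.nonterminal B ∉ u) :
    ∃ w : List T, u = w.map Symbol.terminal := by
  induction u with
  | nil => exact ⟨[], rfl⟩
  | cons a u ih =>
    obtain ⟨w, rfl⟩ := ih fun B hB => h B (List.mem_cons_of_mem _ hB)
    cases a with
    | terminal t => exact ⟨t :: w, rfl⟩
    | nonterminal B => exact absurd List.mem_cons_self (h B)

/-- Sufficiency for an arbitrary sentential form, by induction on the total number of uses. -/
lemma exists_derivesWithCount {P : Finset (ContextFreeRule T N)} (n : ℕ) :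
    ∀ (f : ContextFreeRule T N → ℕ) (u : List (Symbol T N)), (∀ r ∉ P, f r = 0) →
      ∑ r ∈ P, f r = n → HasFlow P f u → Connected P f u →
      ∃ w : List T, DerivesWithCount P u (w.map Symbol.terminal) f := by
  induction n with
  | zero =>
    intro f u hf hsum hflow _
    have hf0 : f = fun _ => 0 := by
      funext r
      by_cases hr : r ∈ P
      · exact Finset.sum_eq_zero_iff.1 hsum r hr
      · exact hf r hr
    subst hf0
    obtain ⟨w, rfl⟩ := eq_map_terminal (u := u) fun B =>
      List.count_eq_zero.1 (by simpa using hflow B)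
    exact ⟨w, .refl _⟩
  | succ n ih =>
    intro f u hf hsum hflow hconn
    obtain ⟨r, hr, hfr⟩ := Finset.exists_ne_zero_of_sum_ne_zero (by omega : ∑ r ∈ P, f r ≠ 0)
    obtain ⟨B, hB, _⟩ := hconn r hr (Nat.pos_of_ne_zero hfr)
    obtain ⟨x, y, rfl⟩ := List.append_of_mem hB
    rw [← List.singleton_append, ← List.append_assoc] at hflow hconn ⊢
    obtain ⟨p, hp, rfl, g, rfl, hg⟩ := exists_good_step hflow hconn
    have hsum' : ∑ r ∈ P, addUse g p r = ∑ r ∈ P, g r + 1 := by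
      simp [addUse, Finset.sum_add_distrib, hp]
    obtain ⟨w, hw⟩ := ih g (x ++ p.output ++ y)
      (fun r hr => Nat.eq_zero_of_add_eq_zero_right (hf r hr)) (by omega)
      ((flow_addUse_iff hp x y).1 hflow) hg
    exact ⟨w, .step p hp x y hw⟩

end Helpers

/-- Euler-type characterization of the Parikh images of terminal derivations of a
context-free grammar: there is a terminal derivation from the start symbol `S` using each
production `p ∈ P` exactly `f p` times iff (i) the flow condition holds at every nonterminal and
(ii) every production used a positive number of times has its left-hand side reachable from `S`
in the graph induced by the used productions. -/
theorem derivesWithCount_iff_flow_and_connectivity {T N : Type} [Fintype T] [Fintype N]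
    (P : Finset (ContextFreeRule T N)) (S : N) (f : ContextFreeRule T N → ℕ)
    (hf : ∀ r ∉ P, f r = 0) :
    (∃ w : List T, DerivesWithCount P [Symbol.nonterminal S] (w.map Symbol.terminal) f) ↔
      ((∀ B : N,
          ((if B = S then 1 else 0) +
            ∑ r ∈ P, f r * (r.output.count (Symbol.nonterminal B)) : ℕ) =
          ∑ r ∈ P, if r.input = B then f r else 0) ∧
        (∀ r ∈ P, 0 < f r →
          Relation.ReflTransGen
            (fun B C : N => ∃ q ∈ P, 0 < f q ∧ q.input = B ∧ Symbol.nonterminal C ∈ q.output)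
            S r.input)) := by
  have hflow : HasFlow P f [Symbol.nonterminal S] ↔ ∀ B : N,
      ((if B = S then 1 else 0) +
        ∑ r ∈ P, f r * (r.output.count (Symbol.nonterminal B)) : ℕ) =
      ∑ r ∈ P, if r.input = B then f r else 0 := by
    refine forall_congr' fun B => ?_
    have : ([Symbol.nonterminal S] : List (Symbol T N)).count (Symbol.nonterminal B) =
        if B = S then 1 else 0 := by
      by_cases h : S = B <;> simp [h, eq_comm (a := B)]
    rw [this]
  have hconn : Connected P f [Symbol.nonterminal S] ↔ ∀ r ∈ P, 0 < f r →
      Relation.ReflTransGen (UsedEdge P f) S r.input := by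
    simp [Connected, Reaches]
  rw [← hflow]
  refine Iff.trans ?_ (and_congr_right' hconn)
  constructor
  · rintro ⟨w, hw⟩
    exact hw.flow_and_connected (by simp)
  · rintro ⟨h1, h2⟩
    exact exists_derivesWithCount _ f _ hf rfl h1 h2
end

section
/- Let Σ be a finite alphabet with at least two letters, let L ⊆ Σ* be a language, and suppose there exist two words u₁, u₂ ∈ Σ* that do not commute (u₁ ++ u₂ ≠ u₂ ++ u₁) such that every word in {u₁, u₂}* (every finite concatenation of copies of u₁ and u₂) is a factor of some word of L of length at most c times its own length, for a fixed constant c > 0. Then L has exponential growth. -/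
/-- The product of copies of `u ++ v` and `v ++ u` that is coded by a list of Booleans: `true` stands
for `u ++ v` and `false` for `v ++ u`. -/
def blockWord {α : Type*} (u v : List α) (l : List Bool) : List α :=
  l.flatMap fun b => if b then u ++ v else v ++ u

lemma length_blockWord {α : Type*} (u v : List α) (l : List Bool) :
    (blockWord u v l).length = l.length * (u.length + v.length) := by
  induction l with
  | nil => simp [blockWord]
  | cons b l ih =>
    simp only [blockWord, List.flatMap_cons, List.length_append, List.length_cons] at ih ⊢
    rw [ih]
    cases b <;> simp <;> ring

lemma blockWord_mem_star {α : Type*} (u v : List α) (l : List Bool) :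
    ∃ k : List (List α), (∀ x ∈ k, x = u ∨ x = v) ∧ blockWord u v l = k.flatten := by
  induction l with
  | nil => exact ⟨[], by simp, by simp [blockWord]⟩
  | cons b l ih =>
    obtain ⟨k, hk, hw⟩ := ih
    simp only [blockWord, List.flatMap_cons] at hw ⊢
    rw [hw]
    cases b
    · exact ⟨v :: u :: k, by simpa using hk, by simp⟩
    · exact ⟨u :: v :: k, by simpa using hk, by simp⟩

/-- `u ++ v` and `v ++ u` are distinct words of the same length, so the code can be read off block by
block. -/
lemma blockWord_injective {α : Type*} {u v : List α} (h : u ++ v ≠ v ++ u) :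
    ∀ {l l' : List Bool}, l.length = l'.length → blockWord u v l = blockWord u v l' → l = l'
  | [], [], _, _ => rfl
  | b :: l, b' :: l', hl, hw => by
    simp only [blockWord, List.flatMap_cons] at hw
    obtain ⟨h1, h2⟩ := List.append_inj hw (by cases b <;> cases b' <;> simp [Nat.add_comm])
    have hb : b = b' := by
      cases b <;> cases b' <;> simp_all
    rw [hb, blockWord_injective h (by simpa using hl) h2]

lemma exists_eq_take_drop_of_isInfix {α : Type*} {w z : List α} (h : w <:+: z) :
    ∃ i ≤ z.length, w = (z.drop i).take w.length := by
  obtain ⟨s, t, rfl⟩ := h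
  exact ⟨s.length, by simp, by simp⟩

/-- A factor is determined by its length, the word containing it and its starting position, so the
`2 ^ n` block words inject into pairs of a word of `L` and a position at most `m`. -/
lemma two_pow_le_ncard_mul {α : Type*} [Fintype α] {L : Set (List α)} {u v : List α}
    (h : u ++ v ≠ v ++ u) (n m : ℕ)
    (hL : ∀ l : List Bool, l.length = n → ∃ z ∈ L, blockWord u v l <:+: z ∧ z.length ≤ m) :
    2 ^ n ≤ ({w ∈ L | w.length ≤ m} : Set (List α)).ncard * (m + 1) := by
  have hfin : ({w ∈ L | w.length ≤ m} : Set (List α)).Finite :=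
    (List.finite_length_le α m).subset fun w hw => hw.2
  have key : ∀ f : Fin n → Bool, ∃ q : List α × ℕ,
      (q.1 ∈ L ∧ q.1.length ≤ m) ∧ q.2 < m + 1 ∧
        blockWord u v (List.ofFn f) = (q.1.drop q.2).take (n * (u.length + v.length)) := by
    intro f
    obtain ⟨z, hz, hw, hm⟩ := hL (List.ofFn f) (by simp)
    obtain ⟨i, hi, he⟩ := exists_eq_take_drop_of_isInfix hw
    rw [length_blockWord, List.length_ofFn] at he
    exact ⟨(z, i), ⟨hz, hm⟩, by simp only; omega, he⟩
  choose q hq1 hq2 hq3 using key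
  have hinj : Function.Injective q := by
    intro f g hfg
    apply List.ofFn_injective
    apply blockWord_injective h (by simp)
    rw [hq3, hq3, hfg]
  have hle := Finset.card_le_card_of_injOn (s := Finset.univ)
    (t := hfin.toFinset ×ˢ Finset.range (m + 1)) q
    (by intro f _; simpa using ⟨hq1 f, by have := hq2 f; omega⟩) hinj.injOn
  rw [Finset.card_product, Finset.card_range, ← Set.ncard_eq_toFinset_card _ hfin] at hle
  simpa using hle

lemma eventually_mul_add_one_le_two_pow (a : ℕ) :
    ∀ᶠ k : ℕ in Filter.atTop, ((a * k + 1 : ℕ) : ℝ) ≤ 2 ^ k := by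
  have h1 := tendsto_pow_const_div_const_pow_of_one_lt 1 (r := (2 : ℝ)) (by norm_num)
  have h2 := h1.eventually (gt_mem_nhds (show (0 : ℝ) < 1 / (a + 1) by positivity))
  filter_upwards [h2, Filter.eventually_ge_atTop 1] with k hk hk1
  rw [div_lt_div_iff₀ (by positivity) (by positivity)] at hk
  have : (1 : ℝ) ≤ k := by exact_mod_cast hk1
  push_cast
  nlinarith

/-- if two non-commuting words `u₁, u₂` are such that every word of `{u₁, u₂}*`
is a factor of some word of `L` of length at most `c` times its own length, then `L` has
exponential growth. -/
theorem exponential_growth_of_free_factors {α : Type*} [Fintype α]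
    (hcard : 1 < Fintype.card α) (L : Set (List α)) (u₁ u₂ : List α)
    (hcomm : u₁ ++ u₂ ≠ u₂ ++ u₁) (c : ℝ) (hc : 0 < c)
    (hfac : ∀ w : List α,
      (∃ l : List (List α), (∀ x ∈ l, x = u₁ ∨ x = u₂) ∧ w = l.flatten) →
      ∃ z ∈ L, w <:+: z ∧ (z.length : ℝ) ≤ c * w.length) :
    HasExponentialGrowth L := by
  have hp : 0 < u₁.length + u₂.length := by
    have : u₁ ≠ [] := by rintro rfl; simp at hcomm
    have := List.length_pos_iff.2 this
    omega
  set p := u₁.length + u₂.length with hpdef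
  obtain ⟨C, hC⟩ := exists_nat_ge (c * p)
  have hC0 : 0 < C := by
    have : (0 : ℝ) < c * p := by positivity
    exact_mod_cast this.trans_le hC
  have hr : (((2 : ℝ) ^ (((2 * C : ℕ) : ℝ)⁻¹)) ^ (2 * C)) = 2 :=
    Real.rpow_inv_natCast_pow (by norm_num) (by omega)
  refine ⟨(2 : ℝ) ^ (((2 * C : ℕ) : ℝ)⁻¹), Real.one_lt_rpow (by norm_num) (by positivity), ?_⟩
  intro N
  obtain ⟨k, hk, hkN⟩ := ((eventually_mul_add_one_le_two_pow (2 * C)).and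
    (Filter.eventually_ge_atTop N)).exists
  refine ⟨2 * C * k, hkN.trans (Nat.le_mul_of_pos_left k (by omega)), ?_⟩
  rw [pow_mul, hr]
  have hcount := two_pow_le_ncard_mul (L := L) hcomm (2 * k) (2 * C * k) (by
    intro l hl
    obtain ⟨z, hz, hw, hlen⟩ := hfac _ (blockWord_mem_star u₁ u₂ l)
    refine ⟨z, hz, hw, ?_⟩
    rw [length_blockWord, hl, ← hpdef] at hlen
    have : (z.length : ℝ) ≤ ((2 * C * k : ℕ) : ℝ) := by
      push_cast at hlen ⊢
      have hk0 : (0 : ℝ) ≤ 2 * k := by positivity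
      nlinarith [mul_le_mul_of_nonneg_right hC hk0]
    exact_mod_cast this)
  generalize ({w ∈ L | w.length ≤ 2 * C * k} : Set (List α)).ncard = M at hcount ⊢
  have hcount' : (2 : ℝ) ^ (2 * k) ≤ M * ((2 * C * k + 1 : ℕ) : ℝ) := by exact_mod_cast hcount
  -- `2 ^ k * 2 ^ k ≤ M * (2 * C * k + 1) ≤ M * 2 ^ k`; cancel one factor `2 ^ k`.
  refine le_of_mul_le_mul_right ?_ (show (0 : ℝ) < 2 ^ k by positivity)
  calc (2 : ℝ) ^ k * 2 ^ k = 2 ^ (2 * k) := by rw [← pow_add, two_mul]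
    _ ≤ M * ((2 * C * k + 1 : ℕ) : ℝ) := hcount'
    _ ≤ M * 2 ^ k := by gcongr
end
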